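/- arXiv:1305.2618 — 2 statements merged into one kernel-verified Lean document; each statement's English description precedes it below -/
import Mathlib

section
/- Let Y be a closed subspace of C₀(ℝⁿ) contained in the range of the Fourier transform on L¹(ℝⁿ). If Y is reflexive, then Y is finite dimensional. -/
open MeasureTheory NormedSpace ZeroAtInfty RealInnerProductSpace

/-- A Banach space is reflexive if the canonical embedding into its bidual is
surjective. -/
def IsReflexiveSpace (W : Type*) [NormedAddCommGroup W] [NormedSpace ℂ W] : Prop :=
  Function.Surjective (inclusionInDoubleDual ℂ W)

/-- The Fourier transform of `f : ℝⁿ → ℂ`, `𝓕f(ξ) = ∫ e^{-i⟨x,ξ⟩} f(x) dx`. -/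
noncomputable def fourierTransf {n : ℕ} (f : EuclideanSpace ℝ (Fin n) → ℂ)
    (ξ : EuclideanSpace ℝ (Fin n)) : ℂ :=
  ∫ x : EuclideanSpace ℝ (Fin n), Complex.exp (-(Complex.I * (⟪x, ξ⟫ : ℝ))) * f x


open Filter Topology

theorem reflexive_double_limit {W : Type*} [NormedAddCommGroup W] [NormedSpace ℂ W]
    (hrefl : IsReflexiveSpace W) (y : ℕ → W) (φ : ℕ → StrongDual ℂ W) (C : ℝ)
    (hy : ∀ k, ‖y k‖ ≤ C) (hφ : ∀ j, ‖φ j‖ ≤ C) (a b : ℝ) (hab : a < b)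
    (h1 : ∀ j k, j ≤ k → b ≤ (φ j (y k)).re) (h2 : ∀ j k, k < j → (φ j (y k)).re ≤ a) :
    False := by
  have key : ∀ (V : Type _) [NormedAddCommGroup V] [NormedSpace ℂ V] (ψ : ℕ → StrongDual ℂ V),
      (∀ j, ‖ψ j‖ ≤ C) → ∃ ψ' : StrongDual ℂ V, ∀ v,
        Tendsto (fun j => ψ j v) (hyperfilter ℕ) (𝓝 (ψ' v)) := by
    intro V _ _ ψ hψ
    have hc := WeakDual.isCompact_closedBall (𝕜 := ℂ) (0 : StrongDual ℂ V) C
    let u : Ultrafilter (WeakDual ℂ V) :=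
      (hyperfilter ℕ).map (fun j => StrongDual.toWeakDual (ψ j))
    have hu : (u : Filter (WeakDual ℂ V)) ≤
        𝓟 (WeakDual.toStrongDual ⁻¹' Metric.closedBall (0 : StrongDual ℂ V) C) := by
      rw [le_principal_iff]
      change ∀ᶠ j in (hyperfilter ℕ : Filter ℕ), _
      exact Eventually.of_forall fun j => by
        simpa using hψ j
    obtain ⟨x, -, hx⟩ := hc.ultrafilter_le_nhds u hu
    refine ⟨WeakDual.toStrongDual x, fun v => ?_⟩
    have ht : Tendsto (fun j => StrongDual.toWeakDual (ψ j)) (hyperfilter ℕ) (𝓝 x) := hx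
    exact ((WeakDual.eval_continuous v).tendsto x).comp ht
  obtain ⟨φ', hφ'⟩ := key W φ hφ
  obtain ⟨ψ, hψ⟩ := key (StrongDual ℂ W) (fun k => inclusionInDoubleDual ℂ W (y k))
    (fun k => (double_dual_bound ℂ W (y k)).trans (hy k))
  obtain ⟨x, rfl⟩ := hrefl ψ
  simp only [dual_def] at hψ
  have re : ∀ {f : ℕ → ℂ} {z : ℂ}, Tendsto f (hyperfilter ℕ) (𝓝 z) →
      Tendsto (fun j => (f j).re) (hyperfilter ℕ) (𝓝 z.re) := fun h =>
    (Complex.continuous_re.tendsto _).comp h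
  have hge : ∀ j : ℕ, ∀ᶠ k in (hyperfilter ℕ : Filter ℕ), j < k := fun j =>
    (Nat.hyperfilter_le_atTop) (eventually_gt_atTop j)
  have A : b ≤ (φ' x).re := by
    refine ge_of_tendsto (re (hφ' x)) (Eventually.of_forall fun j => ?_)
    exact ge_of_tendsto (re (hψ (φ j))) ((hge j).mono fun k hk => h1 j k hk.le)
  have B : (φ' x).re ≤ a := by
    refine le_of_tendsto (re (hψ φ')) (Eventually.of_forall fun k => ?_)
    exact le_of_tendsto (re (hφ' (y k))) ((hge k).mono fun j hj => h2 j k hj)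
  linarith

theorem exists_pairing {α : Type*} [MeasurableSpace α] {μ : Measure α} (g : α → ℂ)
    (hg : Measurable g) (hg1 : ∀ x, ‖g x‖ ≤ 1) :
    ∃ Φ : (α →₁[μ] ℂ) →L[ℂ] ℂ, ‖Φ‖ ≤ 1 ∧ ∀ h : α →₁[μ] ℂ, Φ h = ∫ x, g x * h x ∂μ := by
  have hi : ∀ h : α →₁[μ] ℂ, Integrable (fun x => g x * h x) μ := fun h =>
    (L1.integrable_coeFn h).bdd_mul hg.aestronglyMeasurable (Eventually.of_forall hg1)
  let L : (α →₁[μ] ℂ) →ₗ[ℂ] ℂ :=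
    { toFun := fun h => ∫ x, g x * h x ∂μ
      map_add' := fun h h' => by
        rw [← integral_add (hi h) (hi h')]
        refine integral_congr_ae ?_
        filter_upwards [Lp.coeFn_add h h'] with x hx
        rw [hx, Pi.add_apply, mul_add]
      map_smul' := fun c h => by
        rw [RingHom.id_apply, smul_eq_mul, ← integral_const_mul]
        refine integral_congr_ae ?_
        filter_upwards [Lp.coeFn_smul c h] with x hx
        rw [hx, Pi.smul_apply, smul_eq_mul]; ring }
  have hL : ∀ h, ‖L h‖ ≤ 1 * ‖h‖ := by
    intro h
    rw [one_mul, L1.norm_eq_integral_norm]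
    refine norm_integral_le_of_norm_le (L1.integrable_coeFn h).norm (Eventually.of_forall fun x => ?_)
    rw [norm_mul]
    exact mul_le_of_le_one_left (norm_nonneg _) (hg1 x)
  exact ⟨L.mkContinuous 1 hL, L.mkContinuous_norm_le zero_le_one hL, fun h => rfl⟩

theorem fourierTransf_injective {n : ℕ} {f : EuclideanSpace ℝ (Fin n) → ℂ} (hf : Integrable f)
    (h0 : ∀ ξ, fourierTransf f ξ = 0) : f =ᵐ[volume] 0 := by
  have hF : ∀ ξ, VectorFourier.fourierIntegral Real.fourierChar volume
      (innerₗ (EuclideanSpace ℝ (Fin n))) f ξ = 0 := by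
    intro ξ
    rw [Real.vector_fourierIntegral_eq_integral_exp_smul, ← h0 ((2 * Real.pi) • ξ)]
    unfold fourierTransf
    refine integral_congr_ae (Eventually.of_forall fun x => ?_)
    simp only [innerₗ_apply_apply, smul_eq_mul, inner_smul_right]
    congr 2
    push_cast
    ring
  refine ae_eq_zero_of_integral_contDiff_smul_eq_zero hf.locallyIntegrable fun g g_smooth g_cpt => ?_
  have hg₁ : HasCompactSupport (Complex.ofRealCLM ∘ g) := g_cpt.comp_left rfl
  have hg₂ : ContDiff ℝ (⊤ : ℕ∞) (Complex.ofRealCLM ∘ g) := by fun_prop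
  let G := hg₁.toSchwartzMap hg₂
  have := VectorFourier.integral_fourierIntegral_smul_eq_flip (L := innerₗ (EuclideanSpace ℝ (Fin n)))
    (μ := volume) (ν := volume)
    Real.continuous_fourierChar continuous_inner hf (FourierTransformInv.fourierInv G).integrable
  simp only [hF, zero_smul, integral_zero] at this
  rw [this]
  refine integral_congr_ae (Eventually.of_forall fun x => ?_)
  have h3 : FourierTransform.fourier (FourierTransformInv.fourierInv G) x = G x := by simp
  have h4 : VectorFourier.fourierIntegral Real.fourierChar volume
      (innerₗ (EuclideanSpace ℝ (Fin n))).flip (FourierTransformInv.fourierInv G) x = G x := by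
    rw [← h3, flip_innerₗ, SchwartzMap.fourier_coe]
    rfl
  simp only [h4]
  change g x • f x = f x • (g x : ℂ)
  rw [Complex.real_smul, smul_eq_mul, mul_comm]

/-- Integral of the norm over the complement of a ball. -/
noncomputable def tailInt {E : Type*} [NormedAddCommGroup E] [MeasurableSpace E] (μ : Measure E)
    (h : E → ℂ) (R : ℝ) : ℝ := ∫ x, {x : E | R < ‖x‖}.indicator (fun x => ‖h x‖) x ∂μ

section tail
variable {E : Type*} [NormedAddCommGroup E] [MeasurableSpace E] [BorelSpace E] {μ : Measure E}

theorem tail_meas (R : ℝ) : MeasurableSet {x : E | R < ‖x‖} :=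
  measurableSet_lt measurable_const measurable_norm

theorem tail_integrable {h : E → ℂ} (hh : Integrable h μ) (R : ℝ) :
    Integrable ({x : E | R < ‖x‖}.indicator (fun x => ‖h x‖)) μ :=
  hh.norm.indicator (tail_meas R)

theorem tail_le {h : E → ℂ} (hh : Integrable h μ) (R : ℝ) : tailInt μ h R ≤ ∫ x, ‖h x‖ ∂μ :=
  integral_mono (tail_integrable hh R) hh.norm
    (Set.indicator_le_self' fun _ _ => norm_nonneg _)

theorem tail_anti {h : E → ℂ} (hh : Integrable h μ) {R R' : ℝ} (hR : R ≤ R') :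
    tailInt μ h R' ≤ tailInt μ h R :=
  integral_mono (tail_integrable hh R') (tail_integrable hh R)
    (Set.indicator_le_indicator_of_subset (fun _ hx => lt_of_le_of_lt hR hx)
      fun _ => norm_nonneg _)

theorem tail_tendsto {h : E → ℂ} (hh : Integrable h μ) :
    Tendsto (fun R => tailInt μ h R) atTop (𝓝 0) := by
  have : Tendsto (fun R => tailInt μ h R) atTop (𝓝 (∫ x : E, (0 : ℝ) ∂μ)) := by
    refine tendsto_integral_filter_of_dominated_convergence (fun x => ‖h x‖)
      (Eventually.of_forall fun R => (tail_integrable hh R).aestronglyMeasurable)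
      (Eventually.of_forall fun R => Eventually.of_forall fun x => ?_) hh.norm
      (Eventually.of_forall fun x => ?_)
    · rw [norm_indicator_eq_indicator_norm]
      simp only [norm_norm]
      exact Set.indicator_le_self' (fun _ _ => norm_nonneg _) x
    · refine tendsto_const_nhds.congr' ?_
      filter_upwards [eventually_ge_atTop ‖x‖] with R hR
      rw [Set.indicator_of_notMem]
      simpa using hR
  simpa using this

theorem tight_of_reflexive {W : Type*} [NormedAddCommGroup W] [NormedSpace ℂ W]
    (hrefl : IsReflexiveSpace W) (T : W →L[ℂ] (E →₁[μ] ℂ)) (ε : ℝ) (hε : 0 < ε) :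
    ∃ R : ℝ, ∀ y : W, ‖y‖ ≤ 1 → tailInt μ (T y) R ≤ ε := by
  let S : Set ℝ := {e | 0 ≤ e ∧ ∃ R : ℝ, ∀ y : W, ‖y‖ ≤ 1 → tailInt μ (T y) R ≤ e}
  have hT : ∀ y, Integrable (T y) μ := fun y => L1.integrable_coeFn (T y)
  have hSne : S.Nonempty := by
    refine ⟨‖T‖, norm_nonneg _, 0, fun y hy => ?_⟩
    refine (tail_le (hT y) 0).trans ?_
    rw [← L1.norm_eq_integral_norm]
    exact T.unit_le_opNorm y hy
  have hSb : BddBelow S := ⟨0, fun e he => he.1⟩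
  by_contra hcon
  push Not at hcon
  set η := sInf S with hη
  have hηpos : 0 < η := by
    refine lt_of_lt_of_le hε (le_csInf hSne ?_)
    rintro e ⟨he, R, hR⟩
    obtain ⟨y, hy, hy'⟩ := hcon R
    exact hy'.le.trans (hR y hy)
  obtain ⟨e, ⟨he0, R0, hR0⟩, he⟩ := exists_lt_of_csInf_lt hSne
    (show sInf S < η * (11 / 10) by rw [← hη]; linarith)
  have hbig : ∀ R : ℝ, ∃ y : W, ‖y‖ ≤ 1 ∧ η * (9 / 10) < tailInt μ (T y) R := by
    intro R
    by_contra hc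
    push Not at hc
    have : η ≤ η * (9 / 10) := csInf_le hSb ⟨by positivity, R, hc⟩
    linarith
  have hstep : ∀ R : ℝ, ∃ y : W, ∃ R' : ℝ, ‖y‖ ≤ 1 ∧ η * (9 / 10) < tailInt μ (T y) R ∧
      R ≤ R' ∧ tailInt μ (T y) R' < η / 10 := by
    intro R
    obtain ⟨y, hy, hy'⟩ := hbig R
    obtain ⟨R', h1, h2⟩ := ((eventually_ge_atTop R).and
      ((tail_tendsto (hT y)).eventually (gt_mem_nhds (show 0 < η / 10 by positivity)))).exists
    exact ⟨y, R', hy, hy', h1, h2⟩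
  choose Yf Rf hY1 hY2 hRf hY3 using hstep
  let R : ℕ → ℝ := fun k => Rf^[k] R0
  have hRs : ∀ k, R (k + 1) = Rf (R k) := fun k => Function.iterate_succ_apply' Rf k R0
  have hRm : Monotone R := monotone_nat_of_le_succ fun k => by rw [hRs]; exact hRf _
  let y : ℕ → W := fun k => Yf (R k)
  let A : ℕ → Set E := fun k => {x | R k < ‖x‖ ∧ ‖x‖ ≤ R (k + 1)}
  have hAm : ∀ k, MeasurableSet (A k) := fun k =>
    (tail_meas (R k)).inter (measurableSet_le measurable_norm measurable_const)
  obtain ⟨f, hfm, hf⟩ := exists_measurable_piecewise A hAm (fun k => (T (y k) : E → ℂ))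
    (fun k => (Lp.stronglyMeasurable _).measurable) (by
      intro i j hij x hx
      exfalso
      obtain ⟨⟨h1, h2⟩, h3, h4⟩ := hx
      rcases lt_or_gt_of_ne hij with h | h
      · have := hRm (Nat.succ_le_of_lt h)
        exact absurd (h2.trans this) (not_le.mpr h3)
      · have := hRm (Nat.succ_le_of_lt h)
        exact absurd (h4.trans this) (not_le.mpr h1))
  let g : E → ℂ := fun x => (starRingEnd ℂ) (f x) / ‖f x‖
  have hgm : Measurable g := by
    have : Measurable fun x => (starRingEnd ℂ) (f x) :=
      Complex.continuous_conj.measurable.comp hfm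
    exact this.div (Complex.measurable_ofReal.comp hfm.norm)
  have hg1 : ∀ x, ‖g x‖ ≤ 1 := fun x => by
    simp only [g, norm_div, RCLike.norm_conj, Complex.norm_real, norm_norm]
    exact div_self_le_one _
  let G : ℕ → E → ℂ := fun j => {x : E | R j < ‖x‖}.indicator g
  have hGm : ∀ j, Measurable (G j) := fun j => hgm.indicator (tail_meas _)
  have hG1 : ∀ j x, ‖G j x‖ ≤ 1 := fun j x => by
    rw [norm_indicator_eq_indicator_norm]
    exact (Set.indicator_le_self' (fun _ _ => norm_nonneg _) x).trans (hg1 x)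
  have hex := fun j => exists_pairing (μ := μ) (G j) (hGm j) (hG1 j)
  choose Φ hΦ1 hΦ using hex
  have hGi : ∀ j k, Integrable (fun x => G j x * T (y k) x) μ := fun j k =>
    (hT (y k)).bdd_mul (hGm j).aestronglyMeasurable (Eventually.of_forall (hG1 j))
  have hre : ∀ j k, (Φ j (T (y k))).re = ∫ x, (G j x * T (y k) x).re ∂μ := fun j k => by
    rw [hΦ]
    exact (integral_re (hGi j k)).symm
  refine reflexive_double_limit hrefl y (fun j => (Φ j).comp T) (max 1 ‖T‖)
    (fun k => (hY1 _).trans (le_max_left _ _)) (fun j => ?_) (η / 10) (η / 2) (by linarith)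
    (fun j k hjk => ?_) (fun j k hkj => ?_)
  · refine ((Φ j).opNorm_comp_le T).trans (le_trans ?_ (le_max_right _ _))
    exact mul_le_of_le_one_left (norm_nonneg _) (hΦ1 j)
  · have h1 : η * (9 / 10) < tailInt μ (T (y k)) (R k) := hY2 _
    have h2 : tailInt μ (T (y k)) (R (k + 1)) < η / 10 := by rw [hRs]; exact hY3 _
    have h3 : tailInt μ (T (y k)) (R j) < η * (11 / 10) :=
      ((tail_anti (hT _) (hRm (Nat.zero_le j))).trans (hR0 _ (hY1 _))).trans_lt he
    have h4 : 2 * tailInt μ (T (y k)) (R k) - 2 * tailInt μ (T (y k)) (R (k + 1))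
        - tailInt μ (T (y k)) (R j) ≤ (Φ j (T (y k))).re := by
      rw [hre]
      unfold tailInt
      have i1 := tail_integrable (hT (y k)) (R k)
      have i2 := tail_integrable (hT (y k)) (R (k + 1))
      have i3 := tail_integrable (hT (y k)) (R j)
      rw [← integral_const_mul, ← integral_const_mul, ← integral_sub (i1.const_mul 2)
        (i2.const_mul 2)]
      refine le_trans (le_of_eq (integral_sub ((i1.const_mul 2).sub (i2.const_mul 2)) i3).symm) ?_
      refine integral_mono (((i1.const_mul 2).sub (i2.const_mul 2)).sub i3) (hGi j k).re
        fun x => ?_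
      have hb : -‖T (y k) x‖ ≤ (g x * T (y k) x).re := by
        have h5 := Complex.abs_re_le_norm (g x * T (y k) x)
        rw [norm_mul] at h5
        have h6 := mul_le_of_le_one_left (norm_nonneg (T (y k) x)) (hg1 x)
        have h7 := neg_abs_le (g x * T (y k) x).re
        linarith
      have hjk' := hRm hjk
      have hkk' := hRm (Nat.le_succ k)
      have hA : R k < ‖x‖ → ‖x‖ ≤ R (k + 1) → (g x * T (y k) x).re = ‖T (y k) x‖ := by
        intro a b
        have : f x = T (y k) x := hf k ⟨a, b⟩
        simp only [g, this]
        rw [div_mul_eq_mul_div, mul_comm, Complex.mul_conj, Complex.normSq_eq_norm_sq]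
        rw [← Complex.ofReal_div, Complex.ofReal_re, sq, mul_self_div_self]
      have hnn := norm_nonneg (T (y k) x)
      change 2 * {x : E | R k < ‖x‖}.indicator (fun x => ‖T (y k) x‖) x
        - 2 * {x : E | R (k + 1) < ‖x‖}.indicator (fun x => ‖T (y k) x‖) x
        - {x : E | R j < ‖x‖}.indicator (fun x => ‖T (y k) x‖) x ≤ (G j x * T (y k) x).re
      simp only [Set.indicator_apply, Set.mem_ofPred_eq, G]
      by_cases c1 : R j < ‖x‖
      · by_cases c2 : R k < ‖x‖
        · by_cases c3 : R (k + 1) < ‖x‖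
          · simp only [c1, c2, c3, if_true]; linarith
          · have := hA c2 (not_lt.mp c3)
            simp only [c1, c2, c3, if_true, if_false]; linarith
        · have c3 : ¬ R (k + 1) < ‖x‖ := fun h => c2 (hkk'.trans_lt h)
          simp only [c1, c2, c3, if_true, if_false]; linarith
      · have c2 : ¬ R k < ‖x‖ := fun h => c1 (hjk'.trans_lt h)
        have c3 : ¬ R (k + 1) < ‖x‖ := fun h => c2 (hkk'.trans_lt h)
        simp [c1, c2, c3]
    change _ ≤ (Φ j (T (y k))).re
    linarith
  · have h2 : tailInt μ (T (y k)) (R (k + 1)) < η / 10 := by rw [hRs]; exact hY3 _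
    have h3 := tail_anti (hT (y k)) (hRm (Nat.succ_le_of_lt hkj))
    have h4 : (Φ j (T (y k))).re ≤ tailInt μ (T (y k)) (R j) := by
      rw [hre]
      refine integral_mono (hGi j k).re (tail_integrable (hT (y k)) (R j)) fun x => ?_
      simp only [Set.indicator_apply, Set.mem_ofPred_eq, G]
      split_ifs
      · refine (Complex.re_le_norm _).trans ?_
        rw [norm_mul]
        exact mul_le_of_le_one_left (norm_nonneg _) (hg1 x)
      · simp
    change (Φ j (T (y k))).re ≤ _
    exact h4.trans (h3.trans h2.le)

end tail

theorem C0_norm_le {n : ℕ} (F : C₀(EuclideanSpace ℝ (Fin n), ℂ)) {C : ℝ} (hC : 0 ≤ C)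
    (h : ∀ ξ, ‖F ξ‖ ≤ C) : ‖F‖ ≤ C := by
  rw [← ZeroAtInftyContinuousMap.norm_toBCF_eq_norm]
  exact (BoundedContinuousFunction.norm_le hC).2 h

theorem C0_le_norm {n : ℕ} (F : C₀(EuclideanSpace ℝ (Fin n), ℂ)) (ξ) : ‖F ξ‖ ≤ ‖F‖ := by
  rw [← ZeroAtInftyContinuousMap.norm_toBCF_eq_norm]
  exact F.toBCF.norm_coe_le_norm ξ

theorem equicont_of_tight {n : ℕ} (f : EuclideanSpace ℝ (Fin n) → ℂ) (hf : Integrable f)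
    (R : ℝ) (hR : 0 ≤ R) (ξ η : EuclideanSpace ℝ (Fin n)) :
    ‖fourierTransf f ξ - fourierTransf f η‖ ≤
      R * ‖ξ - η‖ * (∫ x, ‖f x‖) + 2 * tailInt volume f R := by
  have hn : ∀ a : ℝ, ‖Complex.exp (-(Complex.I * a))‖ = 1 := fun a => by
    rw [← mul_neg, ← Complex.ofReal_neg, mul_comm, Complex.norm_exp_ofReal_mul_I]
  have hi : ∀ ξ : EuclideanSpace ℝ (Fin n),
      Integrable fun x => Complex.exp (-(Complex.I * (⟪x, ξ⟫ : ℝ))) * f x := fun ξ =>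
    hf.bdd_mul (c := 1) (by fun_prop) (Eventually.of_forall fun x => (hn _).le)
  unfold fourierTransf tailInt
  rw [← integral_sub (hi ξ) (hi η), ← integral_const_mul, ← integral_const_mul,
    ← integral_add (hf.norm.const_mul _) ((tail_integrable hf R).const_mul _)]
  refine norm_integral_le_of_norm_le ((hf.norm.const_mul _).add
    ((tail_integrable hf R).const_mul _)) (Eventually.of_forall fun x => ?_)
  rw [← sub_mul, norm_mul]
  have hfx := norm_nonneg (f x)
  by_cases hx : R < ‖x‖
  · rw [Set.indicator_of_mem (by exact hx)]
    have : ‖Complex.exp (-(Complex.I * (⟪x, ξ⟫ : ℝ))) - Complex.exp (-(Complex.I * (⟪x, η⟫ : ℝ)))‖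
        ≤ 2 := (norm_sub_le _ _).trans (by rw [hn, hn]; norm_num)
    have h0 : 0 ≤ R * ‖ξ - η‖ * ‖f x‖ := by positivity
    nlinarith
  · rw [Set.indicator_of_notMem (by exact hx), mul_zero, add_zero]
    refine mul_le_mul_of_nonneg_right ?_ hfx
    have e : Complex.exp (-(Complex.I * (⟪x, ξ⟫ : ℝ))) - Complex.exp (-(Complex.I * (⟪x, η⟫ : ℝ)))
        = Complex.exp (-(Complex.I * (⟪x, η⟫ : ℝ))) *
          (Complex.exp (Complex.I * ((⟪x, η - ξ⟫ : ℝ) : ℂ)) - 1) := by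
      rw [mul_sub, mul_one, ← Complex.exp_add, inner_sub_right]
      congr 2
      push_cast
      ring
    rw [e, norm_mul, hn, one_mul]
    refine Real.norm_exp_I_mul_ofReal_sub_one_le.trans ?_
    refine (norm_inner_le_norm _ _).trans ?_
    rw [norm_sub_rev]
    exact mul_le_mul_of_nonneg_right (not_lt.mp hx) (norm_nonneg _)


theorem exists_fourier_lift {n : ℕ}
    {W : Type*} [NormedAddCommGroup W] [NormedSpace ℂ W] [CompleteSpace W]
    (e : W → C₀(EuclideanSpace ℝ (Fin n), ℂ))
    (eadd : ∀ x y ξ, e (x + y) ξ = e x ξ + e y ξ)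
    (esmul : ∀ (c : ℂ) x ξ, e (c • x) ξ = c * e x ξ)
    (enorm : ∀ x, ‖e x‖ = ‖x‖)
    (hsub : ∀ x, ∃ f : EuclideanSpace ℝ (Fin n) → ℂ,
      Integrable f ∧ ∀ ξ, e x ξ = fourierTransf f ξ) :
    ∃ T : W →L[ℂ] (EuclideanSpace ℝ (Fin n) →₁[volume] ℂ),
      ∀ (y : W) ξ, e y ξ = fourierTransf (T y) ξ := by
  have hex : ∀ ξ : EuclideanSpace ℝ (Fin n), _ := fun ξ =>
    exists_pairing (μ := (volume : Measure (EuclideanSpace ℝ (Fin n))))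
      (fun x => Complex.exp (-(Complex.I * (⟪x, ξ⟫ : ℝ))))
      (by fun_prop) (fun x => by
        rw [← mul_neg, ← Complex.ofReal_neg, mul_comm, Complex.norm_exp_ofReal_mul_I])
  choose Φ hΦ1 hΦ using hex
  have hinj : ∀ h h' : EuclideanSpace ℝ (Fin n) →₁[volume] ℂ, (∀ ξ, Φ ξ h = Φ ξ h') → h = h' := by
    intro h h' hh
    rw [← sub_eq_zero, Lp.eq_zero_iff_ae_eq_zero]
    refine fourierTransf_injective (L1.integrable_coeFn _) fun ξ => ?_
    have := hΦ ξ (h - h')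
    rw [map_sub, hh, sub_self] at this
    exact this.symm
  have hlift : ∀ y : W, ∃ h : EuclideanSpace ℝ (Fin n) →₁[volume] ℂ,
      ∀ ξ, (e (y)) ξ = Φ ξ h := by
    intro y
    obtain ⟨f, hf, hFf⟩ := hsub y
    refine ⟨hf.toL1 f, fun ξ => ?_⟩
    rw [hΦ]
    refine (hFf ξ).trans (integral_congr_ae ?_)
    filter_upwards [hf.coeFn_toL1] with x hx
    rw [hx]
  choose t ht using hlift
  let L : W →ₗ[ℂ] (EuclideanSpace ℝ (Fin n) →₁[volume] ℂ) :=
    { toFun := t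
      map_add' := fun y y' => hinj _ _ fun ξ => by
        rw [map_add, ← ht, ← ht, ← ht, eadd]
      map_smul' := fun c y => hinj _ _ fun ξ => by
        rw [RingHom.id_apply, map_smul, ← ht, ← ht, esmul, smul_eq_mul] }
  have hev : ∀ ξ, Continuous fun y : W => (e (y)) ξ := by
    intro ξ
    have : LipschitzWith 1 fun y : W => e y ξ := by
      refine LipschitzWith.of_dist_le_mul fun y y' => ?_
      rw [NNReal.coe_one, one_mul, dist_eq_norm, dist_eq_norm, ← enorm]
      have h : e (y - y') ξ = e y ξ - e y' ξ := by
        rw [sub_eq_add_neg, eadd, ← neg_one_smul ℂ y', esmul]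
        ring
      rw [← h]
      exact C0_le_norm _ _
    exact this.continuous
  have hLc : Continuous L := by
    refine L.continuous_of_seq_closed_graph fun u x y hu hLu => ?_
    refine hinj _ _ fun ξ => ?_
    change _ = Φ ξ (t x)
    rw [← ht]
    refine tendsto_nhds_unique (((Φ ξ).continuous.tendsto y).comp hLu) ?_
    refine (((hev ξ).tendsto x).comp hu).congr fun k => ?_
    exact ht (u k) ξ
  refine ⟨⟨L, hLc⟩, fun y ξ => ?_⟩
  rw [ht y ξ, hΦ]
  rfl


theorem core_finite {n : ℕ}
    {W : Type*} [NormedAddCommGroup W] [NormedSpace ℂ W] [CompleteSpace W]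
    (e : W → C₀(EuclideanSpace ℝ (Fin n), ℂ))
    (eadd : ∀ x y ξ, e (x + y) ξ = e x ξ + e y ξ)
    (esmul : ∀ (c : ℂ) x ξ, e (c • x) ξ = c * e x ξ)
    (enorm : ∀ x, ‖e x‖ = ‖x‖)
    (hsub : ∀ x, ∃ f : EuclideanSpace ℝ (Fin n) → ℂ,
      Integrable f ∧ ∀ ξ, e x ξ = fourierTransf f ξ)
    (hrefl : IsReflexiveSpace W) :
    FiniteDimensional ℂ W := by
  by_contra hinf
  obtain ⟨T, hT⟩ := exists_fourier_lift e eadd esmul enorm hsub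
  -- equicontinuity of the unit ball
  have hequi : ∀ ε : ℝ, 0 < ε → ∃ δ > 0, ∀ y : W, ‖y‖ ≤ 1 → ∀ ξ η, ‖ξ - η‖ ≤ δ →
      ‖(e (y)) ξ - (e (y)) η‖ ≤ ε := by
    intro ε hε
    obtain ⟨R, hR⟩ := tight_of_reflexive hrefl T (ε / 4) (by positivity)
    have hpos : 0 < 2 * (max R 0 + 1) * (‖T‖ + 1) := by positivity
    refine ⟨ε / (2 * (max R 0 + 1) * (‖T‖ + 1)), by positivity, fun y hy ξ η hd => ?_⟩
    rw [hT, hT]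
    have hi := L1.integrable_coeFn (T y)
    refine (equicont_of_tight _ hi (max R 0) (le_max_right _ _) ξ η).trans ?_
    have h1 := (tail_anti hi (le_max_left R 0)).trans (hR y hy)
    rw [← L1.norm_eq_integral_norm]
    have h2 : ‖T y‖ ≤ ‖T‖ + 1 := (T.unit_le_opNorm y hy).trans (by linarith)
    have h3 : max R 0 * ‖ξ - η‖ * ‖T y‖ ≤
        (max R 0 + 1) * (ε / (2 * (max R 0 + 1) * (‖T‖ + 1))) * (‖T‖ + 1) := by
      gcongr
      linarith
    have h4 : (max R 0 + 1) * (ε / (2 * (max R 0 + 1) * (‖T‖ + 1))) * (‖T‖ + 1) = ε / 2 := by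
      have : max R 0 + 1 ≠ 0 := by positivity
      have : ‖T‖ + 1 ≠ 0 := by positivity
      field_simp
    linarith
  -- small on balls
  have hsmall : ∀ r ε : ℝ, 0 < ε → ∃ y : W, ‖y‖ = 1 ∧
      ∀ ξ, ‖ξ‖ ≤ r → ‖(e (y)) ξ‖ ≤ ε := by
    intro r ε hε
    obtain ⟨δ, hδ, hd⟩ := hequi ε hε
    obtain ⟨t, -, htf, htc⟩ := (isCompact_closedBall (0 : EuclideanSpace ℝ (Fin n)) r).finite_cover_balls hδ
    have := htf.fintype
    let ev : W →ₗ[ℂ] (t → ℂ) :=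
      { toFun := fun y p => (e (y)) p
        map_add' := fun _ _ => funext fun _ => eadd _ _ _
        map_smul' := fun _ _ => funext fun _ => esmul _ _ _ }
    have hni : ¬ Function.Injective ev := fun h => hinf (FiniteDimensional.of_injective ev h)
    rw [← LinearMap.ker_eq_bot, Submodule.eq_bot_iff] at hni
    push Not at hni
    obtain ⟨y, hy, hy0⟩ := hni
    have hyn : ‖y‖ ≠ 0 := norm_ne_zero_iff.2 hy0
    have hz1 : ‖((‖y‖⁻¹ : ℝ) : ℂ) • y‖ = 1 := by
      rw [norm_smul, Complex.norm_real, norm_inv, norm_norm, inv_mul_cancel₀ hyn]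
    refine ⟨((‖y‖⁻¹ : ℝ) : ℂ) • y, hz1, fun ξ hξ => ?_⟩
    obtain ⟨p, hp, hpξ⟩ := Set.mem_iUnion₂.1 (htc (by simpa using hξ))
    have h1 := hd _ hz1.le ξ p (by rw [← dist_eq_norm]; exact (Metric.mem_ball.1 hpξ).le)
    have h2 : (e (y)) p = 0 := congrFun (LinearMap.mem_ker.1 hy) ⟨p, hp⟩
    have h3 : (e (((‖y‖⁻¹ : ℝ) : ℂ) • y)) p = 0 := by
      rw [esmul, h2, mul_zero]
    rwa [h3, sub_zero] at h1
  -- one step of the gliding hump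
  have hstep : ∀ (k : ℕ) (r : ℝ), ∃ (y : W) (p : EuclideanSpace ℝ (Fin n)) (r' : ℝ), ‖y‖ ≤ 2 ∧
      (e (y)) p = 1 ∧ r ≤ r' ∧
      (∀ ξ, ‖ξ‖ ≤ r → ‖(e (y)) ξ‖ ≤ (1 / 2) ^ k / 8) ∧
      (∀ ξ, r' < ‖ξ‖ → ‖(e (y)) ξ‖ ≤ (1 / 2) ^ k / 8) := by
    intro k r
    obtain ⟨z, hz, hzr⟩ := hsmall r ((1 / 2) ^ k / 16) (by positivity)
    obtain ⟨p, hp⟩ : ∃ p, 1 / 2 < ‖(e (z)) p‖ := by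
      by_contra hc
      push Not at hc
      have h1 := C0_norm_le (e (z)) (by norm_num) hc
      have h2 : ‖(e (z))‖ = 1 := (enorm z).trans hz
      norm_num [h2] at h1
    set c := (e (z)) p with hc
    have hc0 : c ≠ 0 := norm_pos_iff.1 (by linarith)
    have hcn : ‖c⁻¹‖ ≤ 2 := by
      rw [norm_inv, inv_le_comm₀ (by linarith) (by norm_num)]
      linarith
    have hlim := zero_at_infty (e (z))
    have hev : ∀ᶠ ξ in cocompact (EuclideanSpace ℝ (Fin n)),
        ‖(e (z)) ξ‖ < (1 / 2) ^ k / 16 := by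
      have := hlim.norm
      rw [norm_zero] at this
      exact this.eventually (gt_mem_nhds (by positivity))
    rw [← Metric.cobounded_eq_cocompact, ← comap_norm_atTop, eventually_comap,
      eventually_atTop] at hev
    obtain ⟨r1, hr1⟩ := hev
    have happ : ∀ ξ, (e (c⁻¹ • z)) ξ =
        c⁻¹ * (e (z)) ξ := fun ξ => esmul _ _ _
    have hb : ∀ ξ, ‖(e (z)) ξ‖ ≤ (1 / 2) ^ k / 16 →
        ‖(e (c⁻¹ • z)) ξ‖ ≤ (1 / 2) ^ k / 8 := by
      intro ξ h
      rw [happ, norm_mul]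
      calc _ ≤ 2 * ((1 / 2 : ℝ) ^ k / 16) := by gcongr
        _ = _ := by ring
    refine ⟨c⁻¹ • z, p, max r r1, ?_, ?_, le_max_left _ _, fun ξ h => hb ξ (hzr ξ h),
      fun ξ h => hb ξ (hr1 _ ((le_max_right _ _).trans h.le) ξ rfl).le⟩
    · rw [norm_smul, hz, mul_one]; exact hcn
    · rw [happ, ← hc, inv_mul_cancel₀ hc0]
  choose Yf Pf Rf hY2 hYp hRf hYa hYb using hstep
  let r : ℕ → ℝ := fun k => Nat.rec 0 (fun k r => Rf k r) k
  have hrs : ∀ k, r (k + 1) = Rf k (r k) := fun k => rfl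
  have hrm : Monotone r := monotone_nat_of_le_succ fun k => hRf _ _
  let y : ℕ → W := fun k => Yf k (r k)
  let p : ℕ → EuclideanSpace ℝ (Fin n) := fun k => Pf k (r k)
  have hya : ∀ k ξ, ‖ξ‖ ≤ r k → ‖(e (y k)) ξ‖ ≤ (1 / 2) ^ k / 8 :=
    fun k => hYa k (r k)
  have hyb : ∀ k ξ, r (k + 1) < ‖ξ‖ →
      ‖(e (y k)) ξ‖ ≤ (1 / 2) ^ k / 8 := fun k => hYb k (r k)
  have hyp : ∀ k, (e (y k)) (p k) = 1 := fun k => hYp k (r k)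
  have hone : ∀ ξ i j, i ≠ j → (1 / 2 : ℝ) ^ i / 8 < ‖(e (y i)) ξ‖ →
      ‖(e (y j)) ξ‖ ≤ (1 / 2) ^ j / 8 := by
    intro ξ i j hij hi
    have h1 : r i < ‖ξ‖ := by
      by_contra h
      exact absurd (hya i ξ (not_lt.mp h)) (not_le.mpr hi)
    have h2 : ‖ξ‖ ≤ r (i + 1) := by
      by_contra h
      exact absurd (hyb i ξ (not_le.mp h)) (not_le.mpr hi)
    rcases lt_or_gt_of_ne hij with h | h
    · exact hya j ξ (h2.trans (hrm (Nat.succ_le_of_lt h)))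
    · exact hyb j ξ ((hrm (Nat.succ_le_of_lt h)).trans_lt h1)
  have hpt : ∀ i j, i ≠ j → ‖(e (y j)) (p i)‖ ≤ (1 / 2) ^ j / 8 := by
    intro i j hij
    refine hone _ i j hij ?_
    rw [hyp, norm_one]
    have : (1 / 2 : ℝ) ^ i ≤ 1 := pow_le_one₀ (by norm_num) (by norm_num)
    linarith
  have hsum : ∀ s : Finset ℕ, ∑ i ∈ s, (1 / 2 : ℝ) ^ i / 8 ≤ 1 / 4 := by
    intro s
    rw [← Finset.sum_div]
    have := summable_geometric_two.sum_le_tsum s (fun i _ => by positivity)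
    rw [tsum_geometric_two] at this
    linarith
  let S : ℕ → W := fun k => ∑ i ∈ Finset.range (k + 1), y i
  have hS : ∀ k ξ, (e (S k)) ξ =
      ∑ i ∈ Finset.range (k + 1), (e (y i)) ξ := by
    intro k ξ
    let ev : W →+ ℂ :=
      { toFun := fun y => (e (y)) ξ
        map_zero' := by simpa using esmul 0 0 ξ
        map_add' := fun _ _ => eadd _ _ _ }
    exact map_sum ev y _
  have hSn : ∀ k, ‖S k‖ ≤ 3 := by
    intro k
    rw [← enorm]
    refine C0_norm_le (e (S k)) (by norm_num) fun ξ => ?_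
    obtain ⟨i0, hi0⟩ : ∃ i0, ∀ j, j ≠ i0 →
        ‖(e (y j)) ξ‖ ≤ (1 / 2) ^ j / 8 := by
      by_cases h : ∃ i, (1 / 2 : ℝ) ^ i / 8 < ‖(e (y i)) ξ‖
      · obtain ⟨i, hi⟩ := h
        exact ⟨i, fun j hj => hone ξ i j hj.symm hi⟩
      · push Not at h
        exact ⟨0, fun j _ => h j⟩
    rw [hS]
    refine (norm_sum_le _ _).trans ?_
    have : ∀ i ∈ Finset.range (k + 1), ‖(e (y i)) ξ‖ ≤
        (1 / 2) ^ i / 8 + if i = i0 then 2 else 0 := by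
      intro i _
      split_ifs with h
      · have h1 := C0_le_norm (e (y i)) ξ
        have h2 : ‖(e (y i))‖ ≤ 2 := (enorm _).le.trans (hY2 i (r i))
        have h3 : (0 : ℝ) ≤ (1 / 2) ^ i / 8 := by positivity
        linarith
      · rw [add_zero]; exact hi0 i h
    refine (Finset.sum_le_sum this).trans ?_
    rw [Finset.sum_add_distrib, Finset.sum_ite_eq']
    have h1 := hsum (Finset.range (k + 1))
    split_ifs <;> linarith
  -- evaluation functionals
  have hevc : ∀ ξ, ∃ φ : StrongDual ℂ W, ‖φ‖ ≤ 1 ∧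
      ∀ y : W, φ y = (e (y)) ξ := by
    intro ξ
    let ev : W →ₗ[ℂ] ℂ :=
      { toFun := fun y => (e (y)) ξ
        map_add' := fun _ _ => eadd _ _ _
        map_smul' := fun _ _ => esmul _ _ _ }
    have hb : ∀ y, ‖ev y‖ ≤ 1 * ‖y‖ := fun y => by
      rw [one_mul, ← enorm]; exact C0_le_norm (e (y)) ξ
    exact ⟨ev.mkContinuous 1 hb, ev.mkContinuous_norm_le zero_le_one hb, fun y => rfl⟩
  choose φ hφ1 hφ using hevc
  refine reflexive_double_limit hrefl S (fun j => φ (p j)) 3 hSn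
    (fun j => (hφ1 _).trans (by norm_num)) (1 / 4) (3 / 4) (by norm_num)
    (fun j k hjk => ?_) (fun j k hkj => ?_)
  · rw [hφ, hS, ← Finset.add_sum_erase _ _ (Finset.mem_range.2 (Nat.lt_succ_of_le hjk)), hyp,
      Complex.add_re, Complex.one_re]
    have h1 : ‖∑ i ∈ (Finset.range (k + 1)).erase j,
        (e (y i)) (p j)‖ ≤ 1 / 4 :=
      (norm_sum_le_of_le _ fun i hi => hpt j i (Finset.ne_of_mem_erase hi).symm).trans (hsum _)
    have h2 := (abs_le.1 ((Complex.abs_re_le_norm _).trans h1)).1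
    linarith
  · rw [hφ, hS]
    refine (Complex.re_le_norm _).trans
      ((norm_sum_le_of_le _ fun i hi => hpt j i ?_).trans (hsum _))
    have := Finset.mem_range.1 hi
    omega

/-- A reflexive closed subspace of `C₀(ℝⁿ)` consisting of absolutely
convergent Fourier transforms is finite dimensional. -/
theorem finiteDimensional_of_reflexive_fourier_subspace {n : ℕ}
    (Y : Subspace ℂ C₀(EuclideanSpace ℝ (Fin n), ℂ))
    (hclosed : IsClosed (Y : Set C₀(EuclideanSpace ℝ (Fin n), ℂ)))
    (hsub : ∀ F ∈ Y, ∃ f : EuclideanSpace ℝ (Fin n) → ℂ,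
      Integrable f ∧ ∀ ξ, F ξ = fourierTransf f ξ)
    (hrefl : IsReflexiveSpace ↥Y) :
    FiniteDimensional ℂ ↥Y := by
  have : CompleteSpace Y := hclosed.completeSpace_coe
  exact core_finite (fun y : Y => (y : C₀(EuclideanSpace ℝ (Fin n), ℂ)))
    (fun _ _ _ => rfl) (fun _ _ _ => rfl) (fun _ => rfl) (fun y => hsub y y.2) hrefl
end

section
/- Fix q > 1 and a lacunary sequence of integers ξ_1 > 0 with ξ_{m+1} > q ξ_m, extended by ξ_{-m} = -ξ_m. There is a constant C, independent of the finitely supported sequence a : ℤ → ℂ, such that Σ_m |a(m)| ≤ C · sup_{x ∈ [-π,π)} |Σ_m a(m) e^{i ξ_m x}|. -/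
open Complex in
/-- Fourier coefficients of the Riesz product. -/
noncomputable def rphi (η : ℕ → ℤ) (c : ℕ → ℂ) : ℕ → ℤ → ℂ
  | 0 => fun n => if n = 0 then 1 else 0
  | T + 1 => fun n => rphi η c T n + c T / 2 * rphi η c T (n - η T)
      + (starRingEnd ℂ) (c T) / 2 * rphi η c T (n + η T)

/-- The Riesz product. -/
noncomputable def rprod (η : ℕ → ℤ) (c : ℕ → ℂ) : ℕ → ℝ → ℝ
  | 0 => fun _ => 1
  | T + 1 => fun x => rprod η c T x *
      (1 + (c T * Complex.exp (Complex.I * (η T : ℂ) * (x : ℂ))).re)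

lemma rprod_cont (η : ℕ → ℤ) (c : ℕ → ℂ) (T : ℕ) : Continuous (rprod η c T) := by
  induction T with
  | zero => exact continuous_const
  | succ T ih =>
    unfold rprod
    refine ih.mul (continuous_const.add (Complex.continuous_re.comp ?_))
    fun_prop

lemma norm_char (n : ℤ) (x : ℝ) : ‖Complex.exp (Complex.I * (n : ℂ) * (x : ℂ))‖ = 1 := by
  have : Complex.I * (n : ℂ) * (x : ℂ) = ((n * x : ℝ) : ℂ) * Complex.I := by push_cast; ring
  rw [this, Complex.norm_exp_ofReal_mul_I]

lemma rprod_nonneg (η : ℕ → ℤ) (c : ℕ → ℂ) (hc : ∀ t, ‖c t‖ ≤ 1) (T : ℕ) (x : ℝ) :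
    0 ≤ rprod η c T x := by
  induction T with
  | zero => exact zero_le_one
  | succ T ih =>
    unfold rprod
    refine mul_nonneg ih ?_
    have h := Complex.abs_re_le_norm (c T * Complex.exp (Complex.I * (η T : ℂ) * (x : ℂ)))
    rw [norm_mul, norm_char, mul_one] at h
    have := hc T
    have := neg_abs_le (c T * Complex.exp (Complex.I * (η T : ℂ) * (x : ℂ))).re
    linarith

lemma integral_char (n : ℤ) :
    ∫ x in (-Real.pi)..Real.pi, Complex.exp (Complex.I * (n : ℂ) * (x : ℂ))
      = if n = 0 then 2 * (Real.pi : ℂ) else 0 := by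
  split_ifs with h
  · subst h
    simp
    ring
  · have hn : Complex.I * (n : ℂ) ≠ 0 := by simp [h]
    rw [integral_exp_mul_complex hn]
    have : Complex.exp (Complex.I * n * (Real.pi : ℝ))
        = Complex.exp (Complex.I * n * ((-Real.pi : ℝ) : ℂ)) := by
      rw [Complex.exp_eq_exp_iff_exists_int]
      exact ⟨n, by push_cast; ring⟩
    rw [this]; simp

lemma integral_rprod (η : ℕ → ℤ) (c : ℕ → ℂ) (T : ℕ) : ∀ n : ℤ,
    ∫ x in (-Real.pi)..Real.pi,
      Complex.exp (Complex.I * (n : ℂ) * (x : ℂ)) * (rprod η c T x : ℂ)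
      = 2 * (Real.pi : ℂ) * rphi η c T (-n) := by
  induction T with
  | zero =>
    intro n
    simp only [rprod, rphi, Complex.ofReal_one, mul_one, integral_char]
    simp
  | succ T ih =>
    intro n
    have hcont := rprod_cont η c T
    have key : ∀ x : ℝ, Complex.exp (Complex.I * (n : ℂ) * (x : ℂ)) * (rprod η c (T+1) x : ℂ)
        = Complex.exp (Complex.I * (n : ℂ) * (x : ℂ)) * (rprod η c T x : ℂ)
        + c T / 2 * (Complex.exp (Complex.I * ((n + η T : ℤ) : ℂ) * (x : ℂ)) * (rprod η c T x : ℂ))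
        + (starRingEnd ℂ) (c T) / 2 *
          (Complex.exp (Complex.I * ((n - η T : ℤ) : ℂ) * (x : ℂ)) * (rprod η c T x : ℂ)) := by
      intro x
      simp only [rprod]
      push_cast
      rw [Complex.re_eq_add_conj, map_mul, ← Complex.exp_conj]
      have e1 : Complex.exp (Complex.I * ((n : ℂ) + (η T : ℂ)) * (x : ℂ))
          = Complex.exp (Complex.I * (n : ℂ) * x) * Complex.exp (Complex.I * (η T : ℂ) * x) := by
        rw [← Complex.exp_add]; ring_nf
      have e2 : Complex.exp (Complex.I * ((n : ℂ) - (η T : ℂ)) * (x : ℂ))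
          = Complex.exp (Complex.I * (n : ℂ) * x) * Complex.exp (-(Complex.I * (η T : ℂ) * x)) := by
        rw [← Complex.exp_add]; ring_nf
      have e3 : (starRingEnd ℂ) (Complex.I * (η T : ℂ) * x) = -(Complex.I * (η T : ℂ) * x) := by
        simp
      rw [e1, e2, e3]
      ring
    have hint : ∀ k : ℤ, IntervalIntegrable (fun x : ℝ =>
        Complex.exp (Complex.I * (k : ℂ) * (x : ℂ)) * (rprod η c T x : ℂ))
        MeasureTheory.volume (-Real.pi) Real.pi := by
      intro k
      apply Continuous.intervalIntegrable
      fun_prop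
    simp_rw [key]
    rw [intervalIntegral.integral_add ((hint _).add ((hint _).const_mul _)) ((hint _).const_mul _),
      intervalIntegral.integral_add (hint _) ((hint _).const_mul _),
      intervalIntegral.integral_const_mul, intervalIntegral.integral_const_mul, ih, ih, ih]
    simp only [rphi]
    rw [show -(n + η T) = -n - η T by ring, show -(n - η T) = -n + η T by ring]
    ring

section
variable {η : ℕ → ℤ} {c : ℕ → ℂ} {δ : ℝ}

lemma rphi_far (hδ : 0 < δ) (hη : ∀ t, 0 < (η t : ℝ))
    (H : ∀ t, (1 + δ) * (η t : ℝ) ≤ δ * η (t + 1)) (T : ℕ) :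
    ∀ n : ℤ, δ * η T < |(n : ℝ)| → rphi η c T n = 0 := by
  induction T with
  | zero =>
    intro n hn
    have : n ≠ 0 := by
      rintro rfl
      have := mul_pos hδ (hη 0)
      simp at hn
      linarith
    simp [rphi, this]
  | succ T ih =>
    intro n hn
    have h1 := H T
    have h2 := hη T
    have h3 := abs_sub_abs_le_abs_sub (n : ℝ) (η T : ℝ)
    have h4 := abs_sub_abs_le_abs_sub (n : ℝ) (-(η T : ℝ))
    rw [abs_neg] at h4
    rw [abs_of_pos h2] at h3 h4
    simp only [rphi]
    rw [ih n (by linarith), ih (n - η T) (by push_cast; linarith),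
      ih (n + η T) (by push_cast; rw [← sub_neg_eq_add]; linarith)]
    simp

lemma eta_lt (hδ : 0 < δ) (hη : ∀ t, 0 < (η t : ℝ))
    (H : ∀ t, (1 + δ) * (η t : ℝ) ≤ δ * η (t + 1)) (T : ℕ) :
    ∀ t < T, (η t : ℝ) ≤ δ * η T := by
  induction T with
  | zero => intro t ht; omega
  | succ T ih =>
    intro t ht
    have h1 := H T
    have h2 := hη T
    have h3 := mul_pos hδ h2
    rcases Nat.lt_succ_iff_lt_or_eq.mp ht with h | rfl
    · have := ih t h
      linarith
    · linarith

lemma rphi_gap (hδ : 0 < δ) (hη : ∀ t, 0 < (η t : ℝ))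
    (H : ∀ t, (1 + δ) * (η t : ℝ) ≤ δ * η (t + 1)) (T : ℕ) :
    ∀ n : ℤ, n ≠ 0 → (∀ t < T, δ * η t < |(|(n : ℝ)| - η t)|) → rphi η c T n = 0 := by
  induction T with
  | zero => intro n hn _; simp [rphi, hn]
  | succ T ih =>
    intro n hn h
    have h0 := h T (by omega)
    have h2 := hη T
    have h3 := abs_abs_sub_abs_le_abs_sub (n : ℝ) (η T : ℝ)
    have h4 := abs_abs_sub_abs_le_abs_sub (n : ℝ) (-(η T : ℝ))
    rw [abs_neg] at h4
    rw [abs_of_pos h2] at h3 h4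
    simp only [rphi]
    rw [ih n hn (fun t ht => h t (by omega)),
      rphi_far hδ hη H T (n - η T) (by push_cast; linarith),
      rphi_far hδ hη H T (n + η T) (by push_cast; rw [← sub_neg_eq_add]; linarith)]
    simp

lemma rphi_zero (hδ : 0 < δ) (hδ' : δ < 1 / 2) (hη : ∀ t, 0 < (η t : ℝ))
    (H : ∀ t, (1 + δ) * (η t : ℝ) ≤ δ * η (t + 1)) (T : ℕ) : rphi η c T 0 = 1 := by
  induction T with
  | zero => simp [rphi]
  | succ T ih =>
    have h2 := hη T
    simp only [rphi]
    rw [ih, rphi_far hδ hη H T (0 - η T) (by push_cast; rw [zero_sub, abs_neg, abs_of_pos h2]; nlinarith),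
      rphi_far hδ hη H T (0 + η T) (by push_cast; rw [zero_add, abs_of_pos h2]; nlinarith)]
    simp

lemma rphi_eta (hδ : 0 < δ) (hδ' : δ < 1 / 2) (hη : ∀ t, 0 < (η t : ℝ))
    (H : ∀ t, (1 + δ) * (η t : ℝ) ≤ δ * η (t + 1)) (T : ℕ) :
    ∀ t < T, rphi η c T (η t) = c t / 2 ∧ rphi η c T (-η t) = (starRingEnd ℂ) (c t) / 2 := by
  induction T with
  | zero => intro t ht; omega
  | succ T ih =>
    intro t ht
    have h2 := hη T
    have h2' := hη t
    have h5 : δ * η T < 1 / 2 * η T := mul_lt_mul_of_pos_right hδ' h2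
    have F := rphi_far (c := c) hδ hη H T
    simp only [rphi]
    rcases Nat.lt_succ_iff_lt_or_eq.mp ht with h | rfl
    · have h6 := eta_lt hδ hη H T t h
      rw [(ih t h).1, (ih t h).2,
        F (η t - η T) (by push_cast; rw [lt_abs]; right; linarith),
        F (η t + η T) (by push_cast; rw [lt_abs]; left; linarith),
        F (-η t - η T) (by push_cast; rw [lt_abs]; right; linarith),
        F (-η t + η T) (by push_cast; rw [lt_abs]; left; linarith)]
      simp
    · rw [sub_self, neg_add_cancel, rphi_zero hδ hδ' hη H,
        F (η t) (by rw [lt_abs]; left; linarith),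
        F (-η t) (by push_cast; rw [lt_abs]; right; linarith),
        F (η t + η t) (by push_cast; rw [lt_abs]; left; linarith),
        F (-η t - η t) (by push_cast; rw [lt_abs]; right; linarith)]
      simp
end

/-- Pairing with a Riesz product. -/
lemma pairing (η : ℕ → ℤ) (c : ℕ → ℂ) (hc : ∀ t, ‖c t‖ ≤ 1) (T : ℕ) (h0 : rphi η c T 0 = 1)
    (s : Finset ℤ) (a : ℤ → ℂ) (ξ : ℤ → ℤ) (M : ℝ)
    (hM : ∀ x ∈ Set.Icc (-Real.pi) Real.pi,
      ‖∑ m ∈ s, a m * Complex.exp (Complex.I * (ξ m : ℂ) * (x : ℂ))‖ ≤ M) :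
    ‖∑ m ∈ s, a m * rphi η c T (-ξ m)‖ ≤ M := by
  have hpi := Real.pi_pos
  have hcont := rprod_cont η c T
  have e1 : ∫ x in (-Real.pi)..Real.pi,
      (∑ m ∈ s, a m * Complex.exp (Complex.I * (ξ m : ℂ) * (x : ℂ))) * (rprod η c T x : ℂ)
      = 2 * (Real.pi : ℂ) * ∑ m ∈ s, a m * rphi η c T (-ξ m) := by
    simp_rw [Finset.sum_mul, mul_assoc (a _)]
    rw [intervalIntegral.integral_finsetSum]
    · rw [Finset.mul_sum]
      refine Finset.sum_congr rfl fun m _ => ?_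
      rw [intervalIntegral.integral_const_mul, integral_rprod]
      ring
    · intro m _
      apply Continuous.intervalIntegrable
      fun_prop
  have e2 : ∫ x in (-Real.pi)..Real.pi, rprod η c T x = 2 * Real.pi := by
    have := integral_rprod η c T 0
    simp only [Int.cast_zero, mul_zero, zero_mul, Complex.exp_zero, one_mul, neg_zero, h0,
      mul_one] at this
    rw [intervalIntegral.integral_ofReal] at this
    exact_mod_cast this
  have e3 : ‖∫ x in (-Real.pi)..Real.pi,
      (∑ m ∈ s, a m * Complex.exp (Complex.I * (ξ m : ℂ) * (x : ℂ))) * (rprod η c T x : ℂ)‖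
      ≤ ∫ x in (-Real.pi)..Real.pi, M * rprod η c T x := by
    apply intervalIntegral.norm_integral_le_of_norm_le (by linarith)
    · refine Filter.Eventually.of_forall fun x hx => ?_
      rw [norm_mul, Complex.norm_real, Real.norm_of_nonneg (rprod_nonneg η c hc T x)]
      exact mul_le_mul_of_nonneg_right (hM x ⟨hx.1.le, hx.2⟩) (rprod_nonneg η c hc T x)
    · apply Continuous.intervalIntegrable
      fun_prop
  rw [intervalIntegral.integral_const_mul, e2, e1, norm_mul] at e3
  have : ‖(2 * (Real.pi : ℂ))‖ = 2 * Real.pi := by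
    rw [norm_mul, Complex.norm_real, Real.norm_of_nonneg hpi.le]; simp
  rw [this] at e3
  nlinarith

lemma sum_Icc_sym {E : Type*} [AddCommMonoid E] (F : ℤ → E) (N : ℕ) :
    ∑ m ∈ Finset.Icc (-(N : ℤ)) N, F m
      = F 0 + ∑ k ∈ Finset.range N, (F ((k : ℤ) + 1) + F (-((k : ℤ) + 1))) := by
  induction N with
  | zero => simp
  | succ N ih =>
    have : Finset.Icc (-((N + 1 : ℕ) : ℤ)) ((N + 1 : ℕ) : ℤ)
        = insert ((N : ℤ) + 1) (insert (-((N : ℤ) + 1)) (Finset.Icc (-(N : ℤ)) N)) := by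
      ext m
      simp only [Finset.mem_Icc, Finset.mem_insert]
      push_cast
      omega
    rw [this, Finset.sum_insert, Finset.sum_insert, ih, Finset.sum_range_succ]
    · abel
    · simp
    · simp only [Finset.mem_Icc, Finset.mem_insert]
      omega

lemma sum_blocks {E : Type*} [AddCommMonoid E] (F : ℕ → E) (r T : ℕ) :
    ∑ k ∈ Finset.range (r * T), F k
      = ∑ t ∈ Finset.range T, ∑ j ∈ Finset.range r, F (j + r * t) := by
  induction T with
  | zero => simp
  | succ T ih =>
    rw [Finset.sum_range_succ, ← ih, Nat.mul_succ, Finset.sum_range_add]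
    congr 1
    exact Finset.sum_congr rfl fun j _ => by rw [add_comm]

/-- choice of unimodular factor -/
lemma exists_unimod (z : ℂ) : ∃ c : ℂ, ‖c‖ ≤ 1 ∧ z * (starRingEnd ℂ) c = ‖z‖ := by
  by_cases hz : z = 0
  · exact ⟨0, by simp, by simp [hz]⟩
  · have hz' : (‖z‖ : ℂ) ≠ 0 := by simpa using hz
    refine ⟨z / ‖z‖, by simp [hz], ?_⟩
    rw [map_div₀, Complex.conj_ofReal, mul_div_assoc', Complex.mul_conj']
    field_simp

lemma duality (b b' : ℕ → ℂ) (T : ℕ) (K : ℝ)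
    (h : ∀ c : ℕ → ℂ, (∀ t, ‖c t‖ ≤ 1) →
      ‖∑ t ∈ Finset.range T, (b t * ((starRingEnd ℂ) (c t) / 2) + b' t * (c t / 2))‖ ≤ K) :
    ∑ t ∈ Finset.range T, (‖b t‖ + ‖b' t‖) ≤ 4 * K := by
  choose c hc hcz using fun t => exists_unimod (b t + (starRingEnd ℂ) (b' t))
  choose d hd hdw using fun t => exists_unimod (b t - (starRingEnd ℂ) (b' t))
  have h1 := (Complex.re_le_norm _).trans (h c hc)
  have h2 := (Complex.abs_im_le_norm _).trans (h (fun t => -Complex.I * d t) (by simpa using hd))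
  have h2 := (le_abs_self _).trans h2
  rw [Complex.re_sum] at h1
  rw [Complex.im_sum] at h2
  have k1 : ∀ t, (b t * ((starRingEnd ℂ) (c t) / 2) + b' t * (c t / 2)).re
      = ‖b t + (starRingEnd ℂ) (b' t)‖ / 2 := by
    intro t
    have := congrArg Complex.re (hcz t)
    rw [Complex.ofReal_re] at this
    rw [← this]
    simp
    ring
  have k2 : ∀ t, (b t * ((starRingEnd ℂ) (-Complex.I * d t) / 2)
      + b' t * (-Complex.I * d t / 2)).im = ‖b t - (starRingEnd ℂ) (b' t)‖ / 2 := by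
    intro t
    have := congrArg Complex.re (hdw t)
    rw [Complex.ofReal_re] at this
    rw [← this]
    simp
    ring
  simp_rw [k1] at h1
  simp_rw [k2] at h2
  have k3 : ∀ t, ‖b t‖ + ‖b' t‖ ≤ 2 * (‖b t + (starRingEnd ℂ) (b' t)‖ / 2)
      + 2 * (‖b t - (starRingEnd ℂ) (b' t)‖ / 2) := by
    intro t
    have e1 := norm_add_le (b t + (starRingEnd ℂ) (b' t)) (b t - (starRingEnd ℂ) (b' t))
    have e2 := norm_sub_le (b t + (starRingEnd ℂ) (b' t)) (b t - (starRingEnd ℂ) (b' t))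
    rw [show b t + (starRingEnd ℂ) (b' t) + (b t - (starRingEnd ℂ) (b' t)) = 2 * b t by ring,
      norm_mul] at e1
    rw [show b t + (starRingEnd ℂ) (b' t) - (b t - (starRingEnd ℂ) (b' t))
      = 2 * (starRingEnd ℂ) (b' t) by ring, norm_mul, RCLike.norm_conj] at e2
    simp at e1 e2
    linarith
  calc _ ≤ _ := Finset.sum_le_sum fun t _ => k3 t
    _ = _ := by rw [Finset.sum_add_distrib, ← Finset.mul_sum, ← Finset.mul_sum]
    _ ≤ _ := by linarith

lemma lac_pow {q : ℝ} (hq : 1 < q) (y : ℕ → ℤ) (h0 : ∀ k, 0 < (y k : ℝ))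
    (hl : ∀ k, q * (y k : ℝ) < y (k + 1)) (k d : ℕ) : q ^ d * (y k : ℝ) ≤ y (k + d) := by
  induction d with
  | zero => simp
  | succ d ih =>
    have := hl (k + d)
    have h2 : q * (q ^ d * (y k : ℝ)) ≤ q * y (k + d) :=
      mul_le_mul_of_nonneg_left ih (by linarith)
    rw [pow_succ, ← add_assoc]
    linarith

lemma lac_lt {q : ℝ} (hq : 1 < q) (y : ℕ → ℤ) (h0 : ∀ k, 0 < (y k : ℝ))
    (hl : ∀ k, q * (y k : ℝ) < y (k + 1)) {k l : ℕ} (h : k < l) : q * (y k : ℝ) ≤ y l := by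
  obtain ⟨d, rfl⟩ := Nat.exists_eq_add_of_lt h
  have h1 := lac_pow hq y h0 hl k (d + 1)
  have h2 : q ≤ q ^ (d + 1) := le_self_pow₀ hq.le (by omega)
  have := mul_le_mul_of_nonneg_right h2 (h0 k).le
  rw [add_assoc]
  linarith

/-- Estimate for one residue class of indices. -/
lemma class_bound {q δ : ℝ} (hq : 1 < q) (hδ : 0 < δ) (hδ' : δ < 1 / 2)
    (hδq : 1 < (1 - δ) * q) (r : ℕ) (hr : 1 + δ ≤ δ * q ^ r) (ξ : ℤ → ℤ) (hξ0 : ξ 0 = 0)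
    (hodd : ∀ m : ℤ, ξ (-m) = -ξ m)
    (h0 : ∀ k : ℕ, 0 < (ξ ((k : ℤ) + 1) : ℝ))
    (hl : ∀ k : ℕ, q * (ξ ((k : ℤ) + 1) : ℝ) < ξ (((k + 1 : ℕ) : ℤ) + 1))
    (a : ℤ → ℂ) (T : ℕ) (M : ℝ)
    (hM : ∀ x ∈ Set.Icc (-Real.pi) Real.pi,
      ‖∑ m ∈ Finset.Icc (-((r * T : ℕ) : ℤ)) ((r * T : ℕ) : ℤ),
        a m * Complex.exp (Complex.I * (ξ m : ℂ) * (x : ℂ))‖ ≤ M) (ha0 : ‖a 0‖ ≤ M)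
    (j : ℕ) (hj : j < r) :
    ∑ t ∈ Finset.range T, (‖a (((j + r * t : ℕ) : ℤ) + 1)‖ + ‖a (-(((j + r * t : ℕ) : ℤ) + 1))‖)
      ≤ 8 * M := by
  have hmain := duality (fun t => a (((j + r * t : ℕ) : ℤ) + 1))
    (fun t => a (-(((j + r * t : ℕ) : ℤ) + 1))) T (2 * M) ?_
  · linarith
  intro c hc
  set y : ℕ → ℤ := fun k => ξ ((k : ℤ) + 1) with hy
  set η : ℕ → ℤ := fun t => y (j + r * t) with hηdef
  have hη : ∀ t, 0 < (η t : ℝ) := fun t => h0 _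
  have H : ∀ t, (1 + δ) * (η t : ℝ) ≤ δ * η (t + 1) := by
    intro t
    have h1 := lac_pow hq y h0 hl (j + r * t) r
    have h2 : η (t + 1) = y (j + r * t + r) := by
      simp only [hηdef]; congr 1; ring
    rw [h2]
    calc (1 + δ) * (η t : ℝ) ≤ (δ * q ^ r) * η t := mul_le_mul_of_nonneg_right hr (hη t).le
      _ = δ * (q ^ r * y (j + r * t)) := by simp only [hηdef]; ring
      _ ≤ _ := mul_le_mul_of_nonneg_left h1 hδ.le
  have hz := rphi_zero (c := c) hδ hδ' hη H T
  have hp := pairing η c hc T hz _ a ξ M hM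
  have hgap : ∀ k : ℕ, (∀ t, k ≠ j + r * t) →
      rphi η c T (y k) = 0 ∧ rphi η c T (-y k) = 0 := by
    intro k hk
    have hyk : 0 < (y k : ℝ) := h0 k
    have hyk' : y k ≠ 0 := by
      intro h; rw [h] at hyk; simp at hyk
    have hg : ∀ t < T, δ * η t < |(|((y k : ℤ) : ℝ)| - η t)| := by
      intro t _
      rw [abs_of_pos hyk, lt_abs]
      have ht := hη t
      rcases lt_or_gt_of_ne (hk t) with h | h
      · right
        have h1 : q * (y k : ℝ) ≤ η t := lac_lt hq y h0 hl h
        have h2 : 1 * (y k : ℝ) < (1 - δ) * q * y k := mul_lt_mul_of_pos_right hδq hyk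
        have h3 : (1 - δ) * (q * (y k : ℝ)) ≤ (1 - δ) * η t :=
          mul_le_mul_of_nonneg_left h1 (by linarith)
        linarith
      · left
        have h1 : q * (η t : ℝ) ≤ y k := lac_lt hq y h0 hl h
        have h2 : 1 + δ < q := by nlinarith
        have h3 := mul_lt_mul_of_pos_right h2 ht
        linarith
    exact ⟨rphi_gap hδ hη H T _ hyk' hg,
      rphi_gap hδ hη H T _ (neg_ne_zero.mpr hyk') (by simpa using hg)⟩
  rw [sum_Icc_sym, sum_blocks, hξ0, neg_zero, hz, mul_one] at hp
  have e : ∑ t ∈ Finset.range T, ∑ i ∈ Finset.range r,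
      (a (((i + r * t : ℕ) : ℤ) + 1) * rphi η c T (-ξ (((i + r * t : ℕ) : ℤ) + 1))
      + a (-(((i + r * t : ℕ) : ℤ) + 1)) * rphi η c T (-ξ (-(((i + r * t : ℕ) : ℤ) + 1))))
      = ∑ t ∈ Finset.range T, (a (((j + r * t : ℕ) : ℤ) + 1) * ((starRingEnd ℂ) (c t) / 2)
        + a (-(((j + r * t : ℕ) : ℤ) + 1)) * (c t / 2)) := by
    refine Finset.sum_congr rfl fun t ht => ?_
    have he := rphi_eta (c := c) hδ hδ' hη H T t (Finset.mem_range.mp ht)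
    rw [Finset.sum_eq_single j]
    · rw [hodd, neg_neg]
      change _ * rphi η c T (-η t) + _ * rphi η c T (η t) = _
      rw [he.1, he.2]
    · intro i hi hij
      have hi' := Finset.mem_range.mp hi
      have hg := hgap (i + r * t) (by
        intro t' heq
        apply hij
        have := congrArg (· % r) heq
        simpa [Nat.add_mul_mod_self_left, Nat.mod_eq_of_lt hi', Nat.mod_eq_of_lt hj] using this)
      rw [hodd, neg_neg]
      change _ * rphi η c T (-y (i + r * t)) + _ * rphi η c T (y (i + r * t)) = _
      rw [hg.1, hg.2]
      simp
    · intro h; exact absurd (Finset.mem_range.mpr hj) h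
  rw [e] at hp
  have := norm_sub_le (a 0 + ∑ t ∈ Finset.range T,
    (a (((j + r * t : ℕ) : ℤ) + 1) * ((starRingEnd ℂ) (c t) / 2)
        + a (-(((j + r * t : ℕ) : ℤ) + 1)) * (c t / 2))) (a 0)
  rw [add_sub_cancel_left] at this
  linarith

/-- Sidon-type estimate for lacunary trigonometric sums: for a lacunary
sequence of integer frequencies `ξ` with ratio `q > 1`, the `ℓ¹` norm of the
coefficients is controlled by the sup norm of the trigonometric sum. -/
theorem lacunary_sidon_estimate {q : ℝ} (hq : 1 < q) (ξ : ℤ → ℤ)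
    (hpos : 0 < ξ 1)
    (hlac : ∀ m : ℤ, 1 ≤ m → q * (ξ m : ℝ) < (ξ (m + 1) : ℝ))
    (hodd : ∀ m : ℤ, ξ (-m) = -ξ m) :
    ∃ C > (0 : ℝ), ∀ a : ℤ →₀ ℂ,
      (∑ m ∈ a.support, ‖a m‖) ≤
        C * ⨆ x : Set.Ico (-Real.pi) Real.pi,
          ‖∑ m ∈ a.support, a m * Complex.exp (Complex.I * (ξ m : ℂ) * ((x : ℝ) : ℂ))‖ := by
  have hξ0 : ξ 0 = 0 := by
    have := hodd 0
    simp at this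
    omega
  have hl : ∀ k : ℕ, q * (ξ ((k : ℤ) + 1) : ℝ) < ξ (((k + 1 : ℕ) : ℤ) + 1) := by
    intro k
    have := hlac ((k : ℤ) + 1) (by omega)
    push_cast
    exact this
  have h0 : ∀ k : ℕ, 0 < (ξ ((k : ℤ) + 1) : ℝ) := by
    intro k
    induction k with
    | zero => simpa using hpos
    | succ k ih =>
      have := hl k
      have h3 : 0 < q * (ξ ((k : ℤ) + 1) : ℝ) := mul_pos (by linarith) ih
      linarith
  obtain ⟨δ, hδ, hδ', hδq⟩ : ∃ δ : ℝ, 0 < δ ∧ δ < 1 / 2 ∧ 1 < (1 - δ) * q := by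
    have hq0 : 0 < q := by linarith
    refine ⟨(q - 1) / (2 * q), by apply div_pos <;> linarith, ?_, ?_⟩
    · rw [div_lt_iff₀ (by linarith)]; linarith
    · have : (1 - (q - 1) / (2 * q)) * q = (q + 1) / 2 := by field_simp; ring
      rw [this]; linarith
  obtain ⟨r, hr⟩ := pow_unbounded_of_one_lt ((1 + δ) / δ) hq
  rw [div_lt_iff₀ hδ] at hr
  have hr' : 1 + δ ≤ δ * q ^ r := by linarith
  have hrpos : 0 < r := by
    rcases Nat.eq_zero_or_pos r with h | h
    · subst h; simp at hr'; linarith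
    · exact h
  refine ⟨1 + r * 8, by positivity, fun a => ?_⟩
  set f : ℝ → ℂ := fun x => ∑ m ∈ a.support, a m * Complex.exp (Complex.I * (ξ m : ℂ) * (x : ℂ))
    with hf
  set M := ⨆ x : Set.Ico (-Real.pi) Real.pi, ‖f x‖ with hMdef
  change _ ≤ _ * M
  have hpi := Real.pi_pos
  have hbdd : BddAbove (Set.range fun x : Set.Ico (-Real.pi) Real.pi => ‖f x‖) := by
    refine ⟨∑ m ∈ a.support, ‖a m‖, ?_⟩
    rintro _ ⟨x, rfl⟩
    refine (norm_sum_le _ _).trans (Finset.sum_le_sum fun m _ => ?_)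
    rw [norm_mul, norm_char, mul_one]
  have hMI : ∀ x ∈ Set.Ico (-Real.pi) Real.pi, ‖f x‖ ≤ M := fun x hx => le_ciSup hbdd ⟨x, hx⟩
  have hMc : ∀ x ∈ Set.Icc (-Real.pi) Real.pi, ‖f x‖ ≤ M := by
    intro x hx
    rcases hx.2.lt_or_eq with h | rfl
    · exact hMI x ⟨hx.1, h⟩
    · have : f Real.pi = f (-Real.pi) := by
        refine Finset.sum_congr rfl fun m _ => ?_
        congr 1
        rw [Complex.exp_eq_exp_iff_exists_int]
        exact ⟨ξ m, by push_cast; ring⟩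
      rw [this]
      exact hMI _ ⟨le_rfl, by linarith⟩
  obtain ⟨T, hT⟩ : ∃ T : ℕ, ∀ m ∈ a.support, m.natAbs ≤ T :=
    ⟨a.support.sup Int.natAbs, fun m hm => Finset.le_sup (f := Int.natAbs) hm⟩
  have hsub : a.support ⊆ Finset.Icc (-((r * T : ℕ) : ℤ)) ((r * T : ℕ) : ℤ) := by
    intro m hm
    have h1 := hT m hm
    have h2 : T ≤ r * T := Nat.le_mul_of_pos_left T hrpos
    rw [Finset.mem_Icc]
    omega
  have hM2 : ∀ x ∈ Set.Icc (-Real.pi) Real.pi,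
      ‖∑ m ∈ Finset.Icc (-((r * T : ℕ) : ℤ)) ((r * T : ℕ) : ℤ),
        a m * Complex.exp (Complex.I * (ξ m : ℂ) * (x : ℂ))‖ ≤ M := by
    intro x hx
    rw [← Finset.sum_subset hsub (fun m _ hm => by
      rw [Finsupp.notMem_support_iff.mp hm, zero_mul])]
    exact hMc x hx
  have hinj : ∀ m : ℤ, ξ m = 0 → m = 0 := by
    intro m hm
    by_contra hne
    have hk := h0 (m.natAbs - 1)
    have hc : ((m.natAbs - 1 : ℕ) : ℤ) + 1 = m ∨ ((m.natAbs - 1 : ℕ) : ℤ) + 1 = -m := by omega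
    rcases hc with h | h
    · rw [h, hm] at hk; simp at hk
    · rw [h, hodd, hm] at hk; simp at hk
  have ha0 : ‖a 0‖ ≤ M := by
    have := pairing (fun _ => 0) (fun _ => 0) (by simp) 0 (by simp [rphi]) _ a ξ M hM2
    rw [Finset.sum_eq_single 0] at this
    · simpa [rphi, hξ0] using this
    · intro m _ hm
      have : ξ m ≠ 0 := fun h => hm (hinj m h)
      simp [rphi, this]
    · intro h; exact absurd (Finset.mem_Icc.mpr (by omega)) h
  rw [Finset.sum_subset hsub (fun m _ hm => by
      rw [Finsupp.notMem_support_iff.mp hm, norm_zero]), sum_Icc_sym (fun m => ‖a m‖),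
    sum_blocks, Finset.sum_comm]
  have hfin : ∑ j ∈ Finset.range r, ∑ t ∈ Finset.range T,
      (‖a (((j + r * t : ℕ) : ℤ) + 1)‖ + ‖a (-(((j + r * t : ℕ) : ℤ) + 1))‖)
      ≤ ∑ j ∈ Finset.range r, 8 * M :=
    Finset.sum_le_sum fun j hj => class_bound hq hδ hδ' hδq r hr' ξ hξ0 hodd h0 hl a T M hM2 ha0 j
      (Finset.mem_range.mp hj)
  rw [Finset.sum_const, Finset.card_range, nsmul_eq_mul] at hfin
  linarith
end
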